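/- Under the system model with MRC and transmit powers p_{lm} > 0, fix k ∈ {1,…,K} and fix all parameters except N. Write A_{lm} = x̃_{jk}ᴴ D_{δ(t)} Ψ_j⁻¹ D_{δ(t)}ᴴ x̃_{lm} (so A_{jk} > 0 when x̃_{jk} ≠ 0, since Ψ_j is positive definite and D_{δ(t)} is invertible). Assume x̃_{jk} ≠ 0 and that the pilot-contamination constant Σ_{(l,m)≠(j,k)} p_{lm} λ_{jlm}² |A_{lm}|² is strictly positive. Then, as N → ∞, SINR_{jk}(t; N) converges to p_{jk} λ_{jjk}² A_{jk}² / ( Σ_{(l,m)≠(j,k)} p_{lm} λ_{jlm}² |A_{lm}|² ); in particular the distortion-noise and receiver-noise contributions vanish and only pilot contamination limits the asymptotic SINR. -/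

import Mathlib

open MeasureTheory ProbabilityTheory Matrix Complex
open scoped ProbabilityTheory Kronecker

/-- Deterministic phase-drift damping matrix
`D_{δ(t)} = diag(e^{−δ(t−1)/2}, …, e^{−δ(t−B)/2})`; the `b`-th diagonal entry
(`b : Fin B`, corresponding to pilot time `b+1`) is `e^{−δ(t−(b+1))/2}`. -/
noncomputable def Dmat (δ : ℝ) (t B : ℕ) : Matrix (Fin B) (Fin B) ℂ :=
  Matrix.diagonal fun b => (Real.exp (-(δ / 2) * ((t : ℝ) - ((b : ℕ) + 1))) : ℂ)

/-- Deterministic pilot matrix `X_{ℓm}` built from the pilot sequence `xv`: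
diagonal entries `|x(b)|²(1+κ²)` and off-diagonal entries `x(b₁)x(b₂)* e^{−δ|b₁−b₂|/2}`. -/
noncomputable def Xmat {B : ℕ} (κ δ : ℝ) (xv : Fin B → ℂ) : Matrix (Fin B) (Fin B) ℂ :=
  Matrix.of fun b₁ b₂ =>
    if b₁ = b₂ then ((Complex.normSq (xv b₁) * (1 + κ ^ 2) : ℝ) : ℂ)
    else xv b₁ * star (xv b₂) * (Real.exp (-(δ / 2) * |((b₁ : ℕ) : ℝ) - ((b₂ : ℕ) : ℝ)|) : ℂ)

/-- Deterministic matrix `Ψ_j = Σ_ℓ Σ_m λ_{jℓm} X_{ℓm} + σ²ξ I_B`. -/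
noncomputable def PsiMat {B L K : ℕ} (lam : Fin L → Fin K → ℝ) (σ2 ξ κ δ : ℝ)
    (x : Fin L → Fin K → Fin B → ℂ) : Matrix (Fin B) (Fin B) ℂ :=
  (∑ l, ∑ m, ((lam l m : ℝ) : ℂ) • Xmat κ δ (x l m)) + ((σ2 * ξ : ℝ) : ℂ) • 1

/-- The uplink massive MIMO system model at base station `j`, on the probability space `Ω`,
with `N` antennas, pilot length `B`, `L` cells, `K` users per cell, channel attenuations
`lam l k = λ_{jlk}`, noise variance `σ2 = σ²`, noise amplification `ξ`, distortion parameter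
`κ`, phase-drift variance `δ`, and deterministic pilot sequences `x l k : Fin B → ℂ`
(pilot time `b+1` for `b : Fin B`).  All underlying real random sources are mutually
independent: channel real/imaginary parts `hRe, hIm ~ N(0, λ_{jlk}/2)` (so the channel
coefficients are `CN(0, λ_{jlk})`), phase-drift increments `dphi n u ~ N(0, δ)` (`u ≥ 1`),
distortion real/imaginary parts `zRe, zIm ~ N(0, 1/2)` (so `z ~ CN(0,1)`), and receiver-noise
real/imaginary parts `etaRe, etaIm ~ N(0, σ²ξ/2)` (so `η ~ CN(0, σ²ξ)`). -/
structure MIMOModel (Ω : Type*) [MeasureSpace Ω] (N B L K : ℕ)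
    (lam : Fin L → Fin K → ℝ) (σ2 ξ κ δ : ℝ) (x : Fin L → Fin K → Fin B → ℂ) where
  hRe : Fin L → Fin K → Fin N → Ω → ℝ
  hIm : Fin L → Fin K → Fin N → Ω → ℝ
  dphi : Fin N → ℕ → Ω → ℝ
  zRe : Fin N → ℕ → Ω → ℝ
  zIm : Fin N → ℕ → Ω → ℝ
  etaRe : Fin N → ℕ → Ω → ℝ
  etaIm : Fin N → ℕ → Ω → ℝ
  meas_hRe : ∀ l k n, Measurable (hRe l k n)
  meas_hIm : ∀ l k n, Measurable (hIm l k n)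
  meas_dphi : ∀ n u, Measurable (dphi n u)
  meas_zRe : ∀ n s, Measurable (zRe n s)
  meas_zIm : ∀ n s, Measurable (zIm n s)
  meas_etaRe : ∀ n s, Measurable (etaRe n s)
  meas_etaIm : ∀ n s, Measurable (etaIm n s)
  law_hRe : ∀ l k n, Measure.map (hRe l k n) ℙ = gaussianReal 0 (Real.toNNReal (lam l k / 2))
  law_hIm : ∀ l k n, Measure.map (hIm l k n) ℙ = gaussianReal 0 (Real.toNNReal (lam l k / 2))
  law_dphi : ∀ n u, Measure.map (dphi n u) ℙ = gaussianReal 0 (Real.toNNReal δ)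
  law_zRe : ∀ n s, Measure.map (zRe n s) ℙ = gaussianReal 0 (Real.toNNReal (1 / 2))
  law_zIm : ∀ n s, Measure.map (zIm n s) ℙ = gaussianReal 0 (Real.toNNReal (1 / 2))
  law_etaRe : ∀ n s, Measure.map (etaRe n s) ℙ = gaussianReal 0 (Real.toNNReal (σ2 * ξ / 2))
  law_etaIm : ∀ n s, Measure.map (etaIm n s) ℙ = gaussianReal 0 (Real.toNNReal (σ2 * ξ / 2))
  indep : iIndepFun (m := fun _ => (inferInstance : MeasurableSpace ℝ))
    (fun i : (Fin L × Fin K × Fin N × Bool) ⊕ (Fin N × ℕ) ⊕ (Fin N × ℕ × Bool) ⊕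
        (Fin N × ℕ × Bool) =>
      match i with
      | Sum.inl (l, k, n, false) => hRe l k n
      | Sum.inl (l, k, n, true) => hIm l k n
      | Sum.inr (Sum.inl (n, u)) => dphi n u
      | Sum.inr (Sum.inr (Sum.inl (n, s, false))) => zRe n s
      | Sum.inr (Sum.inr (Sum.inl (n, s, true))) => zIm n s
      | Sum.inr (Sum.inr (Sum.inr (n, s, false))) => etaRe n s
      | Sum.inr (Sum.inr (Sum.inr (n, s, true))) => etaIm n s) (ℙ : Measure Ω)

namespace MIMOModel

variable {Ω : Type*} [MeasureSpace Ω] {N B L K : ℕ} {lam : Fin L → Fin K → ℝ}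
  {σ2 ξ κ δ : ℝ} {x : Fin L → Fin K → Fin B → ℂ}

variable (M : MIMOModel Ω N B L K lam σ2 ξ κ δ x)

/-- Accumulated phase drift `φ_{jn}(s) = Σ_{u=1}^{s} Δ_{jn}(u)`. -/
noncomputable def phase (n : Fin N) (s : ℕ) (ω : Ω) : ℝ :=
  ∑ u ∈ Finset.Icc 1 s, M.dphi n u ω

/-- Channel coefficient `h_{jlk}^{(n)} ~ CN(0, λ_{jlk})`. -/
noncomputable def ch (l : Fin L) (k : Fin K) (n : Fin N) (ω : Ω) : ℂ :=
  Complex.mk (M.hRe l k n ω) (M.hIm l k n ω)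

/-- Distortion variable `z_{jn}(s) ~ CN(0,1)`. -/
noncomputable def z (n : Fin N) (s : ℕ) (ω : Ω) : ℂ :=
  Complex.mk (M.zRe n s ω) (M.zIm n s ω)

/-- Receiver noise `η_j^{(n)}(s) ~ CN(0, σ²ξ)`. -/
noncomputable def eta (n : Fin N) (s : ℕ) (ω : Ω) : ℂ :=
  Complex.mk (M.etaRe n s ω) (M.etaIm n s ω)

/-- Received pilot signal at antenna `n`, pilot time `b+1` (for `b : Fin B`):
`y_j^{(n)}(b) = e^{iφ_{jn}(b)} Σ_l Σ_m h_{jlm}^{(n)} x_{lm}(b)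
  + κ (Σ_l Σ_m |x_{lm}(b)|² |h_{jlm}^{(n)}|²)^{1/2} z_{jn}(b) + η_j^{(n)}(b)`. -/
noncomputable def y (n : Fin N) (b : Fin B) (ω : Ω) : ℂ :=
  Complex.exp (Complex.I * ((M.phase n ((b : ℕ) + 1) ω : ℝ) : ℂ))
      * ∑ l, ∑ m, M.ch l m n ω * x l m b
    + (κ : ℂ) * ((Real.sqrt (∑ l, ∑ m, Complex.normSq (x l m b)
        * Complex.normSq (M.ch l m n ω)) : ℝ) : ℂ) * M.z n ((b : ℕ) + 1) ω
    + M.eta n ((b : ℕ) + 1) ω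

/-- Effective channel at time `t`: `h_{jlk}(t)` has `n`-th entry `e^{iφ_{jn}(t)} h_{jlk}^{(n)}`. -/
noncomputable def hEff (l : Fin L) (k : Fin K) (t : ℕ) (n : Fin N) (ω : Ω) : ℂ :=
  Complex.exp (Complex.I * ((M.phase n t ω : ℝ) : ℂ)) * M.ch l k n ω

/-- LMMSE channel estimate `ĥ_{jlk}(t) = λ_{jlk} Σ_b c_b y_j(b)` with
`(c_1, …, c_B) = x̃_{lk}ᴴ D_{δ(t)} Ψ_j⁻¹`. -/
noncomputable def hHat (l : Fin L) (k : Fin K) (t : ℕ) (n : Fin N) (ω : Ω) : ℂ :=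
  ((lam l k : ℝ) : ℂ) * ∑ b,
    Matrix.vecMul (star (x l k)) (Dmat δ t B * (PsiMat lam σ2 ξ κ δ x)⁻¹) b * M.y n b ω

/-- Data-phase distortion noise `υ_j(t)` with `n`-th entry
`κ (Σ_l Σ_m p_{lm} |h_{jlm}^{(n)}|²)^{1/2} z_{jn}(t)`. -/
noncomputable def ups (p : Fin L → Fin K → ℝ) (t : ℕ) (n : Fin N) (ω : Ω) : ℂ :=
  (κ : ℂ) * ((Real.sqrt (∑ l, ∑ m, p l m * Complex.normSq (M.ch l m n ω)) : ℝ) : ℂ)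
    * M.z n t ω

/-- The uplink SINR of user `k` in cell `j` at time `t` with the MRC filter
`v_{jk}(t) = ĥ_{jjk}(t)`. -/
noncomputable def SINR (p : Fin L → Fin K → ℝ) (j : Fin L) (k : Fin K) (t : ℕ) : ℝ :=
  p j k * Complex.normSq (∫ ω, ∑ n, star (M.hHat j k t n ω) * M.hEff j k t n ω) /
    ((∑ l, ∑ m, p l m * ∫ ω, Complex.normSq (∑ n, star (M.hHat j k t n ω) * M.hEff l m t n ω))
      - p j k * Complex.normSq (∫ ω, ∑ n, star (M.hHat j k t n ω) * M.hEff j k t n ω)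
      + (∫ ω, Complex.normSq (∑ n, star (M.hHat j k t n ω) * M.ups p t n ω))
      + σ2 * ξ * ∫ ω, ∑ n, Complex.normSq (M.hHat j k t n ω))

end MIMOModel

/-! ### General probability lemmas -/

lemma aux_indep_blocks {ι Ω : Type*} [MeasurableSpace Ω] {μ : Measure Ω} {f : ι → Ω → ℝ}
    (hf : ∀ i, Measurable (f i)) (h : iIndepFun f μ) {S T : Set ι} (hST : Disjoint S T) :
    IndepFun (fun ω (i : S) => f i ω) (fun ω (i : T) => f i ω) μ := by
  have h1 := indep_iSup_of_disjoint (fun i => (hf i).comap_le) h.iIndep hST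
  have key : ∀ U : Set ι, MeasurableSpace.comap (fun ω (i : U) => f i ω) inferInstance
      = ⨆ i ∈ U, MeasurableSpace.comap (f i) inferInstance := by
    intro U
    rw [MeasurableSpace.pi, MeasurableSpace.comap_iSup, iSup_subtype']
    simp only [MeasurableSpace.comap_comp]
    rfl
  rw [IndepFun_iff_Indep, key, key]
  exact h1

lemma aux_indep_dep {ι Ω β γ : Type*} [MeasurableSpace Ω] [MeasurableSpace β] [MeasurableSpace γ]
    {μ : Measure Ω} {f : ι → Ω → ℝ}
    (hf : ∀ i, Measurable (f i)) (h : iIndepFun f μ) {S T : Set ι} (hST : Disjoint S T)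
    {G₁ : (ι → ℝ) → β} {G₂ : (ι → ℝ) → γ} (m₁ : Measurable G₁) (m₂ : Measurable G₂)
    (d₁ : DependsOn G₁ S) (d₂ : DependsOn G₂ T) :
    IndepFun (fun ω => G₁ (fun i => f i ω)) (fun ω => G₂ (fun i => f i ω)) μ := by
  classical
  have hb := aux_indep_blocks hf h hST
  have mext : ∀ U : Set ι, Measurable (fun (g : U → ℝ) (i : ι) => if hi : i ∈ U then g ⟨i, hi⟩ else 0) := by
    intro U
    refine measurable_pi_iff.2 fun i => ?_
    by_cases hi : i ∈ U
    · simp only [hi, dite_true]; fun_prop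
    · simp only [hi, dite_false]; fun_prop
  have := hb.comp (m₁.comp (mext S)) (m₂.comp (mext T))
  convert this using 1
  · funext ω
    exact d₁ fun i hi => by simp [hi]
  · funext ω
    exact d₂ fun i hi => by simp [hi]

/-- all moments finite -/
def AuxAL {Ω E : Type*} [MeasurableSpace Ω] [NormedAddCommGroup E] (μ : Measure Ω) (f : Ω → E) : Prop :=
  ∀ p : ENNReal, p ≠ ⊤ → MemLp f p μ

namespace AuxAL
variable {Ω : Type*} [MeasurableSpace Ω] {μ : Measure Ω} 

lemma add {f g : Ω → ℂ} (hf : AuxAL μ f) (hg : AuxAL μ g) : AuxAL μ (fun ω => f ω + g ω) :=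
  fun p hp => (hf p hp).add (hg p hp)

lemma mul {f g : Ω → ℂ} (hf : AuxAL μ f) (hg : AuxAL μ g) : AuxAL μ (fun ω => f ω * g ω) := by
  intro p hp
  have : ENNReal.HolderTriple (2 * p) (2 * p) p := by
    constructor
    rw [ENNReal.mul_inv (by simp) (by simp), ← add_mul, ENNReal.inv_two_add_inv_two, one_mul]
  have h2 : 2 * p ≠ ⊤ := ENNReal.mul_ne_top (by simp) hp
  exact (hg (2 * p) h2).mul (hf (2 * p) h2)

lemma const [IsFiniteMeasure μ] (c : ℂ) : AuxAL μ (fun _ => c) := fun _ _ => memLp_const c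

lemma sum {ι : Type*} (s : Finset ι) {f : ι → Ω → ℂ} (hf : ∀ i ∈ s, AuxAL μ (f i)) :
    AuxAL μ (fun ω => ∑ i ∈ s, f i ω) :=
  fun p hp => memLp_finsetSum s fun i hi => hf i hi p hp

lemma conj {f : Ω → ℂ} (hf : AuxAL μ f) : AuxAL μ (fun ω => star (f ω)) :=
  fun p hp => (hf p hp).star

lemma of_bdd [IsFiniteMeasure μ] {f : Ω → ℂ} (hm : Measurable f) (C : ℝ) (h : ∀ ω, ‖f ω‖ ≤ C) : AuxAL μ f :=
  fun p _ => MemLp.of_bound hm.aestronglyMeasurable C (by filter_upwards with ω using h ω)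

lemma ofReal {f : Ω → ℝ} (hf : AuxAL μ f) : AuxAL μ (fun ω => (f ω : ℂ)) :=
  fun p hp => (hf p hp).ofReal

lemma sqrt [IsFiniteMeasure μ] {f : Ω → ℝ} (hm : Measurable f) (hf : AuxAL μ (fun ω => (f ω : ℂ))) :
    AuxAL μ (fun ω => ((Real.sqrt (f ω) : ℝ) : ℂ)) := by
  have hms : Measurable (fun ω => ((Real.sqrt (f ω) : ℝ) : ℂ)) :=
    Complex.measurable_ofReal.comp hm.sqrt
  have hle : ∀ y : ℝ, ‖((Real.sqrt y : ℝ) : ℂ)‖ ≤ ‖(1 : ℝ) + ‖(y : ℂ)‖‖ := by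
    intro y
    have h0 : (0 : ℝ) ≤ 1 + |y| := by positivity
    rw [Complex.norm_real, Complex.norm_real, Real.norm_eq_abs, Real.norm_eq_abs, Real.norm_eq_abs,
      abs_of_nonneg (Real.sqrt_nonneg _), abs_of_nonneg h0]
    apply Real.sqrt_le_iff.2
    refine ⟨h0, ?_⟩
    nlinarith [abs_nonneg y, le_abs_self y]
  intro p hp
  have h1 : MemLp (fun ω => (1 : ℝ) + ‖(f ω : ℂ)‖) p μ := (memLp_const (1 : ℝ)).add ((hf p hp).norm)
  exact h1.of_le hms.aestronglyMeasurable (Filter.Eventually.of_forall fun ω => hle (f ω))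

lemma integrable {f : Ω → ℂ} (hf : AuxAL μ f) : Integrable f μ :=
  memLp_one_iff_integrable.1 (hf 1 (by simp))
end AuxAL

/-- second moment of a sum of i.i.d. -/
lemma aux_second_moment {Ω Ω₀ : Type*} [MeasurableSpace Ω] [MeasurableSpace Ω₀] {μ : Measure Ω} {P : Measure Ω₀}
    {N : ℕ} (T : Fin N → Ω → Ω₀) (hT : ∀ n, Measurable (T n))
    (hmap : ∀ n, Measure.map (T n) μ = P) (hind : ∀ n m, n ≠ m → IndepFun (T n) (T m) μ)
    (F : Ω₀ → ℂ) (hF : Measurable F) (hL : AuxAL P F) :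
    ∫ ω, Complex.normSq (∑ n, F (T n ω)) ∂μ =
      N * ∫ g, Complex.normSq (F g) ∂P + ((N : ℝ) ^ 2 - N) * Complex.normSq (∫ g, F g ∂P) := by
  have hAL : ∀ n, AuxAL μ (fun ω => F (T n ω)) := by
    intro n p hp
    have := hL p hp
    rw [← hmap n, memLp_map_measure_iff hF.aestronglyMeasurable (hT n).aemeasurable] at this
    exact this
  have hint : ∀ n (G : Ω₀ → ℂ), Measurable G → ∫ ω, G (T n ω) ∂μ = ∫ g, G g ∂P := by
    intro n G hG
    rw [← hmap n, integral_map (hT n).aemeasurable hG.aestronglyMeasurable]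
  apply Complex.ofReal_injective
  have e1 : ∀ z : ℂ, ((Complex.normSq z : ℝ) : ℂ) = z * star z := fun z => (Complex.mul_conj z).symm
  push_cast
  rw [← integral_complex_ofReal, ← integral_complex_ofReal]
  simp only [e1, star_sum, Finset.sum_mul_sum]
  rw [integral_finsetSum _ (fun n _ => (AuxAL.sum _ fun m _ => (hAL n).mul (hAL m).conj).integrable)]
  have step : ∀ n : Fin N, ∫ ω, ∑ m, F (T n ω) * star (F (T m ω)) ∂μ =
      ∫ g, F g * star (F g) ∂P + ((N : ℂ) - 1) * ((∫ g, F g ∂P) * star (∫ g, F g ∂P)) := by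
    intro n
    rw [integral_finsetSum _ (fun m _ => ((hAL n).mul (hAL m).conj).integrable)]
    rw [← Finset.add_sum_erase _ _ (Finset.mem_univ n)]
    congr 1
    · exact hint n (fun g => F g * star (F g)) (by fun_prop)
    · have : ∀ m ∈ Finset.univ.erase n, ∫ ω, F (T n ω) * star (F (T m ω)) ∂μ
          = (∫ g, F g ∂P) * star (∫ g, F g ∂P) := by
        intro m hm
        have hi : IndepFun (fun ω => F (T n ω)) (fun ω => star (F (T m ω))) μ :=
          (hind n m (Finset.ne_of_mem_erase hm).symm).comp hF (continuous_star.measurable.comp hF)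
        rw [hi.integral_fun_mul_eq_mul_integral (hAL n).integrable.1 (hAL m).conj.integrable.1,
          hint n F hF]
        congr 1
        rw [hint m (fun g => star (F g)) (continuous_star.measurable.comp hF)]
        exact integral_conj
      rw [Finset.sum_congr rfl this, Finset.sum_const, Finset.card_erase_of_mem (Finset.mem_univ _)]
      have hN : 1 ≤ N := n.pos
      simp [Nat.cast_sub hN]
  rw [Finset.sum_congr rfl (fun n _ => step n)]
  simp only [Finset.sum_const, Finset.card_univ, Fintype.card_fin, nsmul_eq_mul]
  ring
/-! ### The canonical one-antenna space -/

abbrev AuxI (L K : ℕ) := (Fin L × Fin K × Bool) ⊕ ℕ ⊕ (ℕ × Bool) ⊕ (ℕ × Bool)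

section canon
variable {B L K : ℕ} 

noncomputable def auxVar (lam : Fin L → Fin K → ℝ) (σ2 ξ δ : ℝ) : AuxI L K → ℝ
  | Sum.inl (l, k, _) => lam l k / 2
  | Sum.inr (Sum.inl _) => δ
  | Sum.inr (Sum.inr (Sum.inl _)) => 1 / 2
  | Sum.inr (Sum.inr (Sum.inr _)) => σ2 * ξ / 2

noncomputable def auxP (lam : Fin L → Fin K → ℝ) (σ2 ξ δ : ℝ) : Measure (AuxI L K → ℝ) :=
  Measure.infinitePi fun i => gaussianReal 0 (Real.toNNReal (auxVar lam σ2 ξ δ i))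

instance (lam : Fin L → Fin K → ℝ) (σ2 ξ δ : ℝ) : IsProbabilityMeasure (auxP lam σ2 ξ δ) := by
  unfold auxP; infer_instance

noncomputable def aPh (s : ℕ) (g : AuxI L K → ℝ) : ℝ := ∑ u ∈ Finset.Icc 1 s, g (Sum.inr (Sum.inl u))
noncomputable def aEx (s : ℕ) (g : AuxI L K → ℝ) : ℂ :=
  Complex.exp (Complex.I * ((aPh s g : ℝ) : ℂ))
noncomputable def aCh (l : Fin L) (k : Fin K) (g : AuxI L K → ℝ) : ℂ :=
  Complex.mk (g (Sum.inl (l, k, false))) (g (Sum.inl (l, k, true)))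
noncomputable def aZ (s : ℕ) (g : AuxI L K → ℝ) : ℂ :=
  Complex.mk (g (Sum.inr (Sum.inr (Sum.inl (s, false))))) (g (Sum.inr (Sum.inr (Sum.inl (s, true)))))
noncomputable def aE (s : ℕ) (g : AuxI L K → ℝ) : ℂ :=
  Complex.mk (g (Sum.inr (Sum.inr (Sum.inr (s, false))))) (g (Sum.inr (Sum.inr (Sum.inr (s, true)))))
noncomputable def aSq (w : Fin L → Fin K → ℝ) (g : AuxI L K → ℝ) : ℂ :=
  ((Real.sqrt (∑ l, ∑ m, w l m * Complex.normSq (aCh l m g)) : ℝ) : ℂ)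
noncomputable def aY (κ : ℝ) (x : Fin L → Fin K → Fin B → ℂ) (b : Fin B) (g : AuxI L K → ℝ) : ℂ :=
  aEx ((b : ℕ) + 1) g * ∑ l, ∑ m, aCh l m g * x l m b
    + (κ : ℂ) * aSq (fun l m => Complex.normSq (x l m b)) g * aZ ((b : ℕ) + 1) g
    + aE ((b : ℕ) + 1) g
noncomputable def aU (l : Fin L) (k : Fin K) (t : ℕ) (g : AuxI L K → ℝ) : ℂ := aEx t g * aCh l k g
noncomputable def aV (κ : ℝ) (x : Fin L → Fin K → Fin B → ℂ) (r : ℂ) (c : Fin B → ℂ)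
    (g : AuxI L K → ℝ) : ℂ := r * ∑ b, c b * aY κ x b g
noncomputable def aUps (κ : ℝ) (p : Fin L → Fin K → ℝ) (t : ℕ) (g : AuxI L K → ℝ) : ℂ :=
  (κ : ℂ) * aSq p g * aZ t g

lemma aux_mk (a b : ℝ) : Complex.mk a b = (a : ℂ) + (b : ℂ) * Complex.I := Complex.mk_eq_add_mul_I a b

@[fun_prop] lemma aPh_m (s : ℕ) : Measurable (aPh (L := L) (K := K) s) := by unfold aPh; fun_prop
@[fun_prop] lemma aEx_m (s : ℕ) : Measurable (aEx (L := L) (K := K) s) := by unfold aEx; fun_prop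
@[fun_prop] lemma aCh_m (l : Fin L) (k : Fin K) : Measurable (aCh l k) := by
  unfold aCh; simp only [aux_mk]; fun_prop
@[fun_prop] lemma aZ_m (s : ℕ) : Measurable (aZ (L := L) (K := K) s) := by
  unfold aZ; simp only [aux_mk]; fun_prop
@[fun_prop] lemma aE_m (s : ℕ) : Measurable (aE (L := L) (K := K) s) := by
  unfold aE; simp only [aux_mk]; fun_prop
lemma aNS_m (w : Fin L → Fin K → ℝ) : Measurable
    (fun g : AuxI L K → ℝ => ∑ l, ∑ m, w l m * Complex.normSq (aCh l m g)) := by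
  have := Complex.continuous_normSq.measurable
  fun_prop
@[fun_prop] lemma aSq_m (w : Fin L → Fin K → ℝ) : Measurable (aSq w) :=
  Complex.measurable_ofReal.comp (aNS_m w).sqrt
@[fun_prop] lemma aY_m (κ : ℝ) (x : Fin L → Fin K → Fin B → ℂ) (b : Fin B) : Measurable (aY κ x b) := by
  unfold aY; fun_prop
@[fun_prop] lemma aU_m (l : Fin L) (k : Fin K) (t : ℕ) : Measurable (aU l k t) := by
  unfold aU; fun_prop
@[fun_prop] lemma aV_m (κ : ℝ) (x : Fin L → Fin K → Fin B → ℂ) (r : ℂ) (c : Fin B → ℂ) :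
    Measurable (aV κ x r c) := by
  unfold aV; fun_prop
@[fun_prop] lemma aUps_m (κ : ℝ) (p : Fin L → Fin K → ℝ) (t : ℕ) : Measurable (aUps κ p t) := by
  unfold aUps; fun_prop
lemma aux_star_m {Ω : Type*} [MeasurableSpace Ω] {f : Ω → ℂ} (hf : Measurable f) :
    Measurable (fun ω => star (f ω)) := continuous_star.measurable.comp hf

variable (lam : Fin L → Fin K → ℝ) (σ2 ξ δ : ℝ)

lemma aux_pm (i : AuxI L K) : Measurable (fun g : AuxI L K → ℝ => g i) := measurable_pi_apply i

lemma aux_coord_map (i : AuxI L K) : Measure.map (fun g : AuxI L K → ℝ => g i) (auxP lam σ2 ξ δ)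
    = gaussianReal 0 (Real.toNNReal (auxVar lam σ2 ξ δ i)) := by
  unfold auxP; exact Measure.infinitePi_map_eval _ i

lemma aux_coord_AL (i : AuxI L K) : AuxAL (auxP lam σ2 ξ δ) (fun g => ((g i : ℝ) : ℂ)) := by
  apply AuxAL.ofReal
  intro p hp
  have h := memLp_id_gaussianReal' (μ := 0) (v := Real.toNNReal (auxVar lam σ2 ξ δ i)) p hp
  rw [← aux_coord_map, memLp_map_measure_iff aestronglyMeasurable_id (aux_pm i).aemeasurable] at h
  exact h

lemma aux_iIndep : iIndepFun (fun (i : AuxI L K) (g : AuxI L K → ℝ) => g i) (auxP lam σ2 ξ δ) := by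
  unfold auxP
  exact iIndepFun_infinitePi (X := fun _ ω => ω) (by fun_prop)

lemma aux_int_mul (S : Set (AuxI L K)) {G₁ G₂ : (AuxI L K → ℝ) → ℂ}
    (m₁ : Measurable G₁) (m₂ : Measurable G₂) (d₁ : DependsOn G₁ S) (d₂ : DependsOn G₂ Sᶜ) :
    ∫ g, G₁ g * G₂ g ∂(auxP lam σ2 ξ δ) =
      (∫ g, G₁ g ∂(auxP lam σ2 ξ δ)) * ∫ g, G₂ g ∂(auxP lam σ2 ξ δ) := by
  have := aux_indep_dep (f := fun (i : AuxI L K) (g : AuxI L K → ℝ) => g i) (by fun_prop)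
    (aux_iIndep lam σ2 ξ δ) disjoint_compl_right m₁ m₂ d₁ d₂
  exact this.integral_fun_mul_eq_mul_integral m₁.aestronglyMeasurable m₂.aestronglyMeasurable

lemma aux_coord_mean (i : AuxI L K) : ∫ g, ((g i : ℝ) : ℂ) ∂(auxP lam σ2 ξ δ) = 0 := by
  rw [integral_complex_ofReal]
  have : ∫ y, y ∂(Measure.map (fun g : AuxI L K → ℝ => g i) (auxP lam σ2 ξ δ)) = 0 := by
    rw [aux_coord_map, integral_id_gaussianReal]
  rw [integral_map (aux_pm i).aemeasurable
    (measurable_id' : Measurable (fun y : ℝ => y)).aestronglyMeasurable] at this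
  simp [this]

lemma aux_coord_sq (i : AuxI L K) (h : 0 ≤ auxVar lam σ2 ξ δ i) :
    ∫ g, ((g i : ℝ) : ℂ) * ((g i : ℝ) : ℂ) ∂(auxP lam σ2 ξ δ) = (auxVar lam σ2 ξ δ i : ℝ) := by
  have e := variance_id_gaussianReal (μ := 0) (v := Real.toNNReal (auxVar lam σ2 ξ δ i))
  rw [variance_eq_integral aemeasurable_id] at e
  simp only [id, integral_id_gaussianReal, sub_zero] at e
  rw [← aux_coord_map, integral_map (aux_pm i).aemeasurable (by fun_prop), Real.coe_toNNReal _ h] at e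
  rw [← e, ← integral_complex_ofReal]
  congr 1
  funext g
  push_cast
  ring

lemma aux_coord_ne {i i' : AuxI L K} (h : i ≠ i') :
    ∫ g, ((g i : ℝ) : ℂ) * ((g i' : ℝ) : ℂ) ∂(auxP lam σ2 ξ δ) = 0 := by
  rw [aux_int_mul lam σ2 ξ δ {i} (by fun_prop) (by fun_prop), aux_coord_mean, zero_mul]
  · intro g g' hg; simp [hg i rfl]
  · intro g g' hg; simp only; rw [hg i' (by simpa using h.symm)]

lemma aux_mk_AL (i i' : AuxI L K) : AuxAL (auxP lam σ2 ξ δ) (fun g => Complex.mk (g i) (g i')) := by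
  simp only [aux_mk]
  exact (aux_coord_AL _ _ _ _ i).add ((aux_coord_AL _ _ _ _ i').mul (AuxAL.const _))

lemma aux_mk_mean (i i' : AuxI L K) : ∫ g, Complex.mk (g i) (g i') ∂(auxP lam σ2 ξ δ) = 0 := by
  simp only [aux_mk]
  rw [integral_add (aux_coord_AL _ _ _ _ i).integrable
    ((aux_coord_AL _ _ _ _ i').mul (AuxAL.const _)).integrable, integral_mul_const]
  simp [aux_coord_mean]

lemma aZ_mean (s : ℕ) : ∫ g, aZ s g ∂(auxP lam σ2 ξ δ) = 0 := aux_mk_mean _ _ _ _ _ _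
lemma aE_mean (s : ℕ) : ∫ g, aE s g ∂(auxP lam σ2 ξ δ) = 0 := aux_mk_mean _ _ _ _ _ _
lemma aux_star_mean {f : (AuxI L K → ℝ) → ℂ} (h : ∫ g, f g ∂(auxP lam σ2 ξ δ) = 0) :
    ∫ g, star (f g) ∂(auxP lam σ2 ξ δ) = 0 := by
  have : ∫ g, star (f g) ∂(auxP lam σ2 ξ δ) = star (∫ g, f g ∂(auxP lam σ2 ξ δ)) := integral_conj
  rw [this, h, star_zero]

lemma aCh_AL (l : Fin L) (m : Fin K) : AuxAL (auxP lam σ2 ξ δ) (aCh l m) := aux_mk_AL _ _ _ _ _ _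
lemma aZ_AL (s : ℕ) : AuxAL (auxP lam σ2 ξ δ) (aZ s) := aux_mk_AL _ _ _ _ _ _
lemma aE_AL (s : ℕ) : AuxAL (auxP lam σ2 ξ δ) (aE s) := aux_mk_AL _ _ _ _ _ _
lemma aEx_AL (s : ℕ) : AuxAL (auxP lam σ2 ξ δ) (aEx s) :=
  AuxAL.of_bdd (aEx_m s) 1 fun g => by
    unfold aEx; rw [mul_comm, Complex.norm_exp_ofReal_mul_I]
lemma aSq_AL (w : Fin L → Fin K → ℝ) : AuxAL (auxP lam σ2 ξ δ) (aSq w) := by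
  refine AuxAL.sqrt (aNS_m w) ?_
  have : (fun g : AuxI L K → ℝ => ((∑ l, ∑ m, w l m * Complex.normSq (aCh l m g) : ℝ) : ℂ)) =
      fun g => ∑ l, ∑ m, (w l m : ℂ) * (aCh l m g * star (aCh l m g)) := by
    funext g
    push_cast
    simp only [← Complex.mul_conj]
    rfl
  rw [this]
  exact AuxAL.sum _ fun l _ => AuxAL.sum _ fun m _ => (AuxAL.const _).mul
    ((aCh_AL lam σ2 ξ δ l m).mul (aCh_AL lam σ2 ξ δ l m).conj)
lemma aY_AL (κ : ℝ) (x : Fin L → Fin K → Fin B → ℂ) (b : Fin B) :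
    AuxAL (auxP lam σ2 ξ δ) (aY κ x b) :=
  (((aEx_AL lam σ2 ξ δ _).mul (AuxAL.sum _ fun l _ => AuxAL.sum _ fun m _ =>
    (aCh_AL lam σ2 ξ δ l m).mul (AuxAL.const _))).add
    (((AuxAL.const _).mul (aSq_AL lam σ2 ξ δ _)).mul (aZ_AL lam σ2 ξ δ _))).add (aE_AL lam σ2 ξ δ _)
lemma aU_AL (l : Fin L) (m : Fin K) (t : ℕ) : AuxAL (auxP lam σ2 ξ δ) (aU l m t) :=
  (aEx_AL lam σ2 ξ δ t).mul (aCh_AL lam σ2 ξ δ l m)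
lemma aV_AL (κ : ℝ) (x : Fin L → Fin K → Fin B → ℂ) (r : ℂ) (c : Fin B → ℂ) :
    AuxAL (auxP lam σ2 ξ δ) (aV κ x r c) :=
  (AuxAL.const _).mul (AuxAL.sum _ fun b _ => (AuxAL.const _).mul (aY_AL lam σ2 ξ δ κ x b))
lemma aUps_AL (κ : ℝ) (p : Fin L → Fin K → ℝ) (t : ℕ) : AuxAL (auxP lam σ2 ξ δ) (aUps κ p t) :=
  ((AuxAL.const _).mul (aSq_AL lam σ2 ξ δ _)).mul (aZ_AL lam σ2 ξ δ _)
end canon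
section canon2
variable {B L K : ℕ} 

lemma aPh_congr {s : ℕ} {g g' : AuxI L K → ℝ} (h : ∀ u, g (Sum.inr (Sum.inl u)) = g' (Sum.inr (Sum.inl u))) :
    aPh s g = aPh s g' := by simp [aPh, h]
lemma aEx_congr {s : ℕ} {g g' : AuxI L K → ℝ} (h : ∀ u, g (Sum.inr (Sum.inl u)) = g' (Sum.inr (Sum.inl u))) :
    aEx s g = aEx s g' := by simp [aEx, aPh_congr h]
lemma aCh_congr {l : Fin L} {m : Fin K} {g g' : AuxI L K → ℝ} (h : ∀ u, g (Sum.inl u) = g' (Sum.inl u)) :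
    aCh l m g = aCh l m g' := by simp [aCh, h]
lemma aSq_congr {w : Fin L → Fin K → ℝ} {g g' : AuxI L K → ℝ} (h : ∀ u, g (Sum.inl u) = g' (Sum.inl u)) :
    aSq w g = aSq w g' := by
  unfold aSq
  simp only [fun l m => aCh_congr (l := l) (m := m) h]
lemma aZ_congr {s : ℕ} {g g' : AuxI L K → ℝ}
    (h : ∀ c, g (Sum.inr (Sum.inr (Sum.inl (s, c)))) = g' (Sum.inr (Sum.inr (Sum.inl (s, c))))) :
    aZ s g = aZ s g' := by simp [aZ, h]
lemma aE_congr {s : ℕ} {g g' : AuxI L K → ℝ}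
    (h : ∀ c, g (Sum.inr (Sum.inr (Sum.inr (s, c)))) = g' (Sum.inr (Sum.inr (Sum.inr (s, c))))) :
    aE s g = aE s g' := by simp [aE, h]
lemma aY_congr {κ : ℝ} {x : Fin L → Fin K → Fin B → ℂ} {b : Fin B} {g g' : AuxI L K → ℝ}
    (h1 : ∀ u, g (Sum.inl u) = g' (Sum.inl u))
    (h2 : ∀ u, g (Sum.inr (Sum.inl u)) = g' (Sum.inr (Sum.inl u)))
    (h3 : ∀ c, g (Sum.inr (Sum.inr (Sum.inl ((b : ℕ) + 1, c)))) = g' (Sum.inr (Sum.inr (Sum.inl ((b : ℕ) + 1, c)))))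
    (h4 : ∀ u, g (Sum.inr (Sum.inr (Sum.inr u))) = g' (Sum.inr (Sum.inr (Sum.inr u)))) :
    aY κ x b g = aY κ x b g' := by
  unfold aY
  rw [aEx_congr h2, aSq_congr h1, aZ_congr h3, aE_congr fun c => h4 _]
  simp only [fun l m => aCh_congr (l := l) (m := m) h1]

def auxSZ (s : ℕ) : Set (AuxI L K) := {i | ∃ c, i = Sum.inr (Sum.inr (Sum.inl (s, c)))}
def auxSE (s : ℕ) : Set (AuxI L K) := {i | ∃ c, i = Sum.inr (Sum.inr (Sum.inr (s, c)))}
def auxSP : Set (AuxI L K) := {i | ∃ u, i = Sum.inr (Sum.inl u)}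

variable (lam : Fin L → Fin K → ℝ) (σ2 ξ δ : ℝ)

lemma aU_expand (κ : ℝ) (x : Fin L → Fin K → Fin B → ℂ) (p : Fin L → Fin K → ℝ) (r : ℂ) (c : Fin B → ℂ)
    (t : ℕ) (ht : B < t) :
    ∫ g, star (aV κ x r c g) * aUps κ p t g ∂(auxP lam σ2 ξ δ) = 0 := by
  have e : (fun g => star (aV κ x r c g) * aUps κ p t g) =
      fun g => aZ t g * (star (aV κ x r c g) * ((κ : ℂ) * aSq p g)) := by
    funext g; unfold aUps; ring
  have m := aux_star_m (aV_m κ x r c)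
  rw [e, aux_int_mul lam σ2 ξ δ (auxSZ t) (by fun_prop) (by fun_prop), aZ_mean, zero_mul]
  · intro g g' h
    exact aZ_congr fun c => h _ ⟨c, rfl⟩
  · intro g g' h
    have h1 : ∀ u, g (Sum.inl u) = g' (Sum.inl u) := fun u => h _ (by simp [auxSZ])
    have : aV κ x r c g = aV κ x r c g' := by
      unfold aV
      congr 1
      refine Finset.sum_congr rfl fun b _ => ?_
      rw [aY_congr h1 (fun u => h _ (by simp [auxSZ])) (fun u => h _ _) (fun u => h _ (by simp [auxSZ]))]
      have := b.2
      simp [auxSZ]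
      omega
    simp only
    rw [this, aSq_congr h1]

lemma aux_exp (hδ : 0 ≤ δ) (s t : ℕ) (hst : s ≤ t) :
    ∫ g, star (aEx s g) * aEx t g ∂(auxP lam σ2 ξ δ) =
      (Real.exp (-(δ / 2) * ((t : ℝ) - s)) : ℂ) := by
  have e : (fun g : AuxI L K → ℝ => star (aEx s g) * aEx t g) = fun g =>
      Complex.exp (((1 : ℝ) : ℂ) * ((∑ u ∈ Finset.Ioc s t, g (Sum.inr (Sum.inl u)) : ℝ) : ℂ) * Complex.I) := by
    funext g
    have : aPh t g = aPh s g + ∑ u ∈ Finset.Ioc s t, g (Sum.inr (Sum.inl u)) := by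
      unfold aPh
      rw [← Finset.sum_union]
      · congr 1; ext u; simp; omega
      · rw [Finset.disjoint_left]; intro u; simp; omega
    unfold aEx
    rw [this]
    change (starRingEnd ℂ) _ * _ = _
    rw [← Complex.exp_conj, ← Complex.exp_add]
    congr 1
    simp only [map_mul, Complex.conj_I, Complex.conj_ofReal]
    push_cast
    ring
  have hm : Measurable (fun g : AuxI L K → ℝ => ∑ u ∈ Finset.Ioc s t, g (Sum.inr (Sum.inl u))) := by
    fun_prop
  have hi : iIndepFun (fun (u : ℕ) (g : AuxI L K → ℝ) => g (Sum.inr (Sum.inl u))) (auxP lam σ2 ξ δ) :=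
    (aux_iIndep lam σ2 ξ δ).precomp (g := fun u : ℕ => (Sum.inr (Sum.inl u) : AuxI L K))
      (fun a b h => by simpa using h)
  have h := iIndepFun.charFun_map_fun_finsetSum_eq_prod (s := Finset.Ioc s t)
    (X := fun (u : ℕ) (g : AuxI L K → ℝ) => g (Sum.inr (Sum.inl u))) (P := auxP lam σ2 ξ δ)
    (fun i _ => (aux_pm _).aemeasurable) (hi.restrict _)
  have h1 := congrFun h 1
  rw [charFun_apply_real, integral_map hm.aemeasurable (by fun_prop)] at h1
  rw [e, h1, Finset.prod_apply]
  simp only [aux_coord_map, charFun_gaussianReal, Finset.prod_const, Nat.card_Ioc, auxVar,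
    Real.coe_toNNReal _ hδ]
  rw [← Complex.exp_nat_mul, Complex.ofReal_exp]
  congr 1
  push_cast [Nat.cast_sub hst]
  ring

lemma aux_hh (hlam : ∀ l k, 0 < lam l k) (l l' : Fin L) (m m' : Fin K) :
    ∫ g, star (aCh l' m' g) * aCh l m g ∂(auxP lam σ2 ξ δ) =
      if (l', m') = (l, m) then ((lam l m : ℝ) : ℂ) else 0 := by
  set P := auxP lam σ2 ξ δ
  have e : (fun g : AuxI L K → ℝ => star (aCh l' m' g) * aCh l m g) = fun g =>
      ((g (Sum.inl (l', m', false)) : ℝ) : ℂ) * ((g (Sum.inl (l, m, false)) : ℝ) : ℂ)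
      + ((g (Sum.inl (l', m', true)) : ℝ) : ℂ) * ((g (Sum.inl (l, m, true)) : ℝ) : ℂ)
      + (((g (Sum.inl (l', m', false)) : ℝ) : ℂ) * ((g (Sum.inl (l, m, true)) : ℝ) : ℂ)) * Complex.I
      + (((g (Sum.inl (l', m', true)) : ℝ) : ℂ) * ((g (Sum.inl (l, m, false)) : ℝ) : ℂ)) * (-Complex.I) := by
    funext g
    apply Complex.ext <;> simp [aCh]
  have A : ∀ i i' : AuxI L K, AuxAL P (fun g => ((g i : ℝ) : ℂ) * ((g i' : ℝ) : ℂ)) := fun i i' =>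
    (aux_coord_AL lam σ2 ξ δ i).mul (aux_coord_AL lam σ2 ξ δ i')
  rw [e, integral_add (((A _ _).add (A _ _)).add ((A _ _).mul (AuxAL.const _))).integrable
      ((A _ _).mul (AuxAL.const _)).integrable,
    integral_add ((A _ _).add (A _ _)).integrable ((A _ _).mul (AuxAL.const _)).integrable,
    integral_add (A _ _).integrable (A _ _).integrable, integral_mul_const, integral_mul_const]
  rw [aux_coord_ne lam σ2 ξ δ (i := Sum.inl (l', m', false)) (i' := Sum.inl (l, m, true)) (by simp),
    aux_coord_ne lam σ2 ξ δ (i := Sum.inl (l', m', true)) (i' := Sum.inl (l, m, false)) (by simp)]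
  split_ifs with hh
  · obtain ⟨rfl, rfl⟩ := Prod.mk.inj hh
    have hv : 0 ≤ lam l' m' / 2 := by have := hlam l' m'; positivity
    rw [aux_coord_sq lam σ2 ξ δ _ (by simpa [auxVar] using hv),
      aux_coord_sq lam σ2 ξ δ _ (by simpa [auxVar] using hv)]
    simp [auxVar]
  · have hne : ∀ c, (Sum.inl (l', m', c) : AuxI L K) ≠ Sum.inl (l, m, c) := by
      intro c hc
      apply hh
      simpa using hc
    rw [aux_coord_ne lam σ2 ξ δ (hne false), aux_coord_ne lam σ2 ξ δ (hne true)]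
    simp

lemma aux_yU (hlam : ∀ l k, 0 < lam l k) (hδ : 0 ≤ δ) (κ : ℝ) (x : Fin L → Fin K → Fin B → ℂ)
    (b : Fin B) (t : ℕ) (ht : B < t) (l : Fin L) (m : Fin K) :
    ∫ g, star (aY κ x b g) * aU l m t g ∂(auxP lam σ2 ξ δ) =
      ((lam l m : ℝ) : ℂ) * star (x l m b) * (Real.exp (-(δ / 2) * ((t : ℝ) - ((b : ℕ) + 1))) : ℂ) := by
  set P := auxP lam σ2 ξ δ with hP
  set s := (b : ℕ) + 1 with hs
  have hst : s ≤ t := by have := b.2; omega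
  set w : Fin L → Fin K → ℝ := fun l m => Complex.normSq (x l m b) with hw
  have e : (fun g : AuxI L K → ℝ => star (aY κ x b g) * aU l m t g) = fun g =>
      (star (aEx s g) * aEx t g) * (∑ l', ∑ m', (star (aCh l' m' g) * aCh l m g) * star (x l' m' b))
      + star (aZ s g) * (star ((κ : ℂ) * aSq w g) * aU l m t g)
      + star (aE s g) * aU l m t g := by
    funext g
    unfold aY
    rw [star_add, star_add, star_mul', star_mul' _ (aZ _ _), add_mul, add_mul]
    congr 1
    · congr 1
      · simp only [star_sum, star_mul', Finset.mul_sum, Finset.sum_mul]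
        refine Finset.sum_congr rfl fun l' _ => Finset.sum_congr rfl fun m' _ => ?_
        unfold aU
        ring
      · ring
  have A1 : AuxAL P (fun g => star (aEx s g) * aEx t g) :=
    (aEx_AL lam σ2 ξ δ s).conj.mul (aEx_AL lam σ2 ξ δ t)
  have A2 : ∀ l' m', AuxAL P (fun g => (star (aCh l' m' g) * aCh l m g) * star (x l' m' b)) := fun l' m' =>
    ((aCh_AL lam σ2 ξ δ l' m').conj.mul (aCh_AL lam σ2 ξ δ l m)).mul (AuxAL.const _)
  have A3 : AuxAL P (fun g => ∑ l', ∑ m', (star (aCh l' m' g) * aCh l m g) * star (x l' m' b)) :=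
    AuxAL.sum _ fun l' _ => AuxAL.sum _ fun m' _ => A2 l' m'
  have A4 : AuxAL P (fun g => star (aZ s g) * (star ((κ : ℂ) * aSq w g) * aU l m t g)) :=
    (aZ_AL lam σ2 ξ δ s).conj.mul ((((AuxAL.const _).mul (aSq_AL lam σ2 ξ δ w)).conj).mul
      (aU_AL lam σ2 ξ δ l m t))
  have A5 : AuxAL P (fun g => star (aE s g) * aU l m t g) :=
    (aE_AL lam σ2 ξ δ s).conj.mul (aU_AL lam σ2 ξ δ l m t)
  have m1 : Measurable (fun g : AuxI L K → ℝ => star (aEx s g)) := aux_star_m (aEx_m s)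
  have m2 : ∀ l m, Measurable (fun g : AuxI L K → ℝ => star (aCh l m g)) := fun l m =>
    aux_star_m (aCh_m l m)
  have m3 : Measurable (fun g : AuxI L K → ℝ => star (aZ s g)) := aux_star_m (aZ_m s)
  have m4 : Measurable (fun g : AuxI L K → ℝ => star (aE s g)) := aux_star_m (aE_m s)
  have m5 : Measurable (fun g : AuxI L K → ℝ => star ((κ : ℂ) * aSq w g)) :=
    aux_star_m (measurable_const.mul (aSq_m w))
  rw [e, integral_add ((A1.mul A3).add A4).integrable A5.integrable,
    integral_add (A1.mul A3).integrable A4.integrable]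
  have I1 := aux_int_mul lam σ2 ξ δ auxSP
    (G₁ := fun g => star (aEx s g) * aEx t g)
    (G₂ := fun g => ∑ l', ∑ m', (star (aCh l' m' g) * aCh l m g) * star (x l' m' b))
    (by fun_prop) (by fun_prop)
    (by
      intro g g' h
      have h2 : ∀ u, g (Sum.inr (Sum.inl u)) = g' (Sum.inr (Sum.inl u)) := fun u => h _ ⟨u, rfl⟩
      simp only
      rw [aEx_congr (s := s) h2, aEx_congr (s := t) h2])
    (by
      intro g g' h
      have h1 : ∀ u, g (Sum.inl u) = g' (Sum.inl u) := fun u => h _ (by simp [auxSP])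
      simp only [fun l m => aCh_congr (l := l) (m := m) h1])
  have I2 := aux_int_mul lam σ2 ξ δ (auxSZ s)
    (G₁ := fun g => star (aZ s g))
    (G₂ := fun g => star ((κ : ℂ) * aSq w g) * aU l m t g)
    (by fun_prop) (by fun_prop)
    (by
      intro g g' h
      simp only
      rw [aZ_congr fun c => h _ ⟨c, rfl⟩])
    (by
      intro g g' h
      have h1 : ∀ u, g (Sum.inl u) = g' (Sum.inl u) := fun u => h _ (by simp [auxSZ])
      have h2 : ∀ u, g (Sum.inr (Sum.inl u)) = g' (Sum.inr (Sum.inl u)) := fun u => h _ (by simp [auxSZ])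
      unfold aU
      simp only
      rw [aEx_congr h2, aCh_congr h1, aSq_congr h1])
  have I3 := aux_int_mul lam σ2 ξ δ (auxSE s)
    (G₁ := fun g => star (aE s g)) (G₂ := aU l m t)
    (by fun_prop) (by fun_prop)
    (by
      intro g g' h
      simp only
      rw [aE_congr fun c => h _ ⟨c, rfl⟩])
    (by
      intro g g' h
      have h1 : ∀ u, g (Sum.inl u) = g' (Sum.inl u) := fun u => h _ (by simp [auxSE])
      have h2 : ∀ u, g (Sum.inr (Sum.inl u)) = g' (Sum.inr (Sum.inl u)) := fun u => h _ (by simp [auxSE])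
      unfold aU
      rw [aEx_congr h2, aCh_congr h1])
  rw [I1, I2, I3, aux_star_mean lam σ2 ξ δ (aZ_mean lam σ2 ξ δ s),
    aux_star_mean lam σ2 ξ δ (aE_mean lam σ2 ξ δ s), aux_exp lam σ2 ξ δ hδ s t hst,
    zero_mul, zero_mul, add_zero, add_zero]
  rw [integral_finsetSum _ (fun l' _ => (AuxAL.sum _ fun m' _ => A2 l' m').integrable)]
  have : ∀ l', ∫ g, ∑ m', (star (aCh l' m' g) * aCh l m g) * star (x l' m' b) ∂P =
      ∑ m', (if (l', m') = (l, m) then ((lam l m : ℝ) : ℂ) else 0) * star (x l' m' b) := by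
    intro l'
    rw [integral_finsetSum _ (fun m' _ => (A2 l' m').integrable)]
    refine Finset.sum_congr rfl fun m' _ => ?_
    rw [integral_mul_const, aux_hh lam σ2 ξ δ hlam]
  simp only [this]
  rw [← Fintype.sum_prod_type' (f := fun l' m' => (if (l', m') = (l, m) then ((lam l m : ℝ) : ℂ) else 0) * star (x l' m' b))]
  rw [Finset.sum_eq_single (l, m)]
  · rw [if_pos rfl]
    simp only [hs]
    push_cast
    ring
  · rintro ⟨a, b⟩ _ h
    rw [if_neg h, zero_mul]
  · simp

lemma aux_VU (hlam : ∀ l k, 0 < lam l k) (hδ : 0 ≤ δ) (κ : ℝ) (x : Fin L → Fin K → Fin B → ℂ)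
    (r : ℂ) (c : Fin B → ℂ) (t : ℕ) (ht : B < t) (l : Fin L) (m : Fin K) :
    ∫ g, star (aV κ x r c g) * aU l m t g ∂(auxP lam σ2 ξ δ) =
      star r * ((lam l m : ℝ) : ℂ) * star (∑ b, c b *
        ((Real.exp (-(δ / 2) * ((t : ℝ) - ((b : ℕ) + 1))) : ℂ) * x l m b)) := by
  have e : (fun g : AuxI L K → ℝ => star (aV κ x r c g) * aU l m t g) = fun g =>
      ∑ b, (star r * star (c b)) * (star (aY κ x b g) * aU l m t g) := by
    funext g
    unfold aV
    rw [star_mul', star_sum, Finset.mul_sum, Finset.sum_mul]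
    refine Finset.sum_congr rfl fun b _ => ?_
    rw [star_mul']
    ring
  rw [e, integral_finsetSum _ (fun b _ => ((AuxAL.const _).mul ((aY_AL lam σ2 ξ δ κ x b).conj.mul
    (aU_AL lam σ2 ξ δ l m t))).integrable), star_sum, Finset.mul_sum]
  refine Finset.sum_congr rfl fun b _ => ?_
  rw [integral_const_mul, aux_yU lam σ2 ξ δ hlam hδ κ x b t ht l m, star_mul', star_mul']
  have : star ((Real.exp (-(δ / 2) * ((t : ℝ) - ((b : ℕ) + 1))) : ℂ)) =
    (Real.exp (-(δ / 2) * ((t : ℝ) - ((b : ℕ) + 1))) : ℂ) := Complex.conj_ofReal _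
  rw [this]
  ring
end canon2
section link
variable {Ω : Type*} [MeasureSpace Ω] {N B L K : ℕ} {lam : Fin L → Fin K → ℝ}
  {σ2 ξ κ δ : ℝ} {x : Fin L → Fin K → Fin B → ℂ}

def auxSrc (M : MIMOModel Ω N B L K lam σ2 ξ κ δ x) :
    (Fin L × Fin K × Fin N × Bool) ⊕ (Fin N × ℕ) ⊕ (Fin N × ℕ × Bool) ⊕ (Fin N × ℕ × Bool) → Ω → ℝ
  | Sum.inl (l, k, n, false) => M.hRe l k n
  | Sum.inl (l, k, n, true) => M.hIm l k n
  | Sum.inr (Sum.inl (n, u)) => M.dphi n u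
  | Sum.inr (Sum.inr (Sum.inl (n, s, false))) => M.zRe n s
  | Sum.inr (Sum.inr (Sum.inl (n, s, true))) => M.zIm n s
  | Sum.inr (Sum.inr (Sum.inr (n, s, false))) => M.etaRe n s
  | Sum.inr (Sum.inr (Sum.inr (n, s, true))) => M.etaIm n s

def auxEmb (n : Fin N) : AuxI L K →
    (Fin L × Fin K × Fin N × Bool) ⊕ (Fin N × ℕ) ⊕ (Fin N × ℕ × Bool) ⊕ (Fin N × ℕ × Bool)
  | Sum.inl (l, k, c) => Sum.inl (l, k, n, c)
  | Sum.inr (Sum.inl u) => Sum.inr (Sum.inl (n, u))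
  | Sum.inr (Sum.inr (Sum.inl (s, c))) => Sum.inr (Sum.inr (Sum.inl (n, s, c)))
  | Sum.inr (Sum.inr (Sum.inr (s, c))) => Sum.inr (Sum.inr (Sum.inr (n, s, c)))

def auxT (M : MIMOModel Ω N B L K lam σ2 ξ κ δ x) (n : Fin N) (ω : Ω) : AuxI L K → ℝ :=
  fun i => auxSrc M (auxEmb n i) ω

variable (M : MIMOModel Ω N B L K lam σ2 ξ κ δ x)

lemma auxSrc_indep : iIndepFun (auxSrc M) (ℙ : Measure Ω) := by
  have h := M.indep
  convert h using 1
  funext i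
  rcases i with ⟨l, k, n, _ | _⟩ | ⟨n, u⟩ | ⟨n, s, _ | _⟩ | ⟨n, s, _ | _⟩ <;> rfl

lemma auxSrc_meas (i) : Measurable (auxSrc M i) := by
  rcases i with ⟨l, k, n, _ | _⟩ | ⟨n, u⟩ | ⟨n, s, _ | _⟩ | ⟨n, s, _ | _⟩
  exacts [M.meas_hRe _ _ _, M.meas_hIm _ _ _, M.meas_dphi _ _, M.meas_zRe _ _, M.meas_zIm _ _,
    M.meas_etaRe _ _, M.meas_etaIm _ _]

lemma auxSrc_law (n : Fin N) (i : AuxI L K) : Measure.map (auxSrc M (auxEmb n i)) ℙ =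
    gaussianReal 0 (Real.toNNReal (auxVar lam σ2 ξ δ i)) := by
  rcases i with ⟨l, k, _ | _⟩ | u | ⟨s, _ | _⟩ | ⟨s, _ | _⟩
  exacts [M.law_hRe _ _ _, M.law_hIm _ _ _, M.law_dphi _ _, M.law_zRe _ _, M.law_zIm _ _,
    M.law_etaRe _ _, M.law_etaIm _ _]

lemma auxEmb_inj (n : Fin N) : Function.Injective (auxEmb (L := L) (K := K) n) := by
  rintro (⟨l, k, c⟩ | u | ⟨s, c⟩ | ⟨s, c⟩) (⟨l', k', c'⟩ | u' | ⟨s', c'⟩ | ⟨s', c'⟩) h <;>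
    simp_all [auxEmb]

lemma auxEmb_ne {n n' : Fin N} (hn : n ≠ n') (i i' : AuxI L K) : auxEmb n i ≠ auxEmb n' i' := by
  intro h
  rcases i with (⟨l, k, c⟩ | u | ⟨s, c⟩ | ⟨s, c⟩) <;>
  rcases i' with (⟨l', k', c'⟩ | u' | ⟨s', c'⟩ | ⟨s', c'⟩) <;>
    simp_all [auxEmb]

lemma auxT_meas (n : Fin N) : Measurable (auxT M n) :=
  measurable_pi_iff.2 fun i => auxSrc_meas M _

lemma auxT_map (n : Fin N) : Measure.map (auxT M n) ℙ = auxP lam σ2 ξ δ := by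
  have h : iIndepFun (fun i => auxSrc M (auxEmb n i)) (ℙ : Measure Ω) :=
    (auxSrc_indep M).precomp (auxEmb_inj n)
  have h2 := h.map_fun_eq_infinitePi_map (fun i => auxSrc_meas M _)
  simp only [auxSrc_law] at h2
  exact h2

lemma auxT_indep (n n' : Fin N) (hn : n ≠ n') : IndepFun (auxT M n) (auxT M n') (ℙ : Measure Ω) := by
  refine aux_indep_dep (f := auxSrc M) (auxSrc_meas M) (auxSrc_indep M)
    (S := Set.range (auxEmb n)) (T := Set.range (auxEmb n')) ?_
    (G₁ := fun g i => g (auxEmb n i)) (G₂ := fun g i => g (auxEmb n' i)) (by fun_prop) (by fun_prop)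
    ?_ ?_
  · rw [Set.disjoint_left]
    rintro _ ⟨i, rfl⟩ ⟨i', h⟩
    exact auxEmb_ne hn i i' h.symm
  · intro g g' h; funext i; exact h _ ⟨i, rfl⟩
  · intro g g' h; funext i; exact h _ ⟨i, rfl⟩

noncomputable def auxC (lam : Fin L → Fin K → ℝ) (σ2 ξ κ δ : ℝ) (x : Fin L → Fin K → Fin B → ℂ)
    (l : Fin L) (k : Fin K) (t : ℕ) : Fin B → ℂ :=
  Matrix.vecMul (star (x l k)) (Dmat δ t B * (PsiMat lam σ2 ξ κ δ x)⁻¹)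

lemma aux_hHat (l : Fin L) (k : Fin K) (t : ℕ) (n : Fin N) (ω : Ω) :
    M.hHat l k t n ω = aV κ x ((lam l k : ℝ) : ℂ) (auxC lam σ2 ξ κ δ x l k t) (auxT M n ω) := rfl
lemma aux_hEff (l : Fin L) (k : Fin K) (t : ℕ) (n : Fin N) (ω : Ω) :
    M.hEff l k t n ω = aU l k t (auxT M n ω) := rfl
lemma aux_ups (p : Fin L → Fin K → ℝ) (t : ℕ) (n : Fin N) (ω : Ω) :
    M.ups p t n ω = aUps κ p t (auxT M n ω) := rfl

lemma aux_first_moment (F : (AuxI L K → ℝ) → ℂ) (hF : Measurable F)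
    (hL : AuxAL (auxP lam σ2 ξ δ) F) :
    ∫ ω, ∑ n, F (auxT M n ω) = N * ∫ g, F g ∂(auxP lam σ2 ξ δ) := by
  rw [integral_finsetSum]
  · have : ∀ n, ∫ ω, F (auxT M n ω) = ∫ g, F g ∂(auxP lam σ2 ξ δ) := by
      intro n
      rw [← auxT_map M n, integral_map (auxT_meas M n).aemeasurable hF.aestronglyMeasurable]
    simp [this]
  · intro n _
    have := hL.integrable
    rw [← auxT_map M n, integrable_map_measure hF.aestronglyMeasurable (auxT_meas M n).aemeasurable] at this
    exact this

lemma aux_power (F : (AuxI L K → ℝ) → ℂ) (hF : Measurable F)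
    (hL : AuxAL (auxP lam σ2 ξ δ) F) :
    ∫ ω, ∑ n, Complex.normSq (F (auxT M n ω)) = N * ∫ g, Complex.normSq (F g) ∂(auxP lam σ2 ξ δ) := by
  apply Complex.ofReal_injective
  have h := aux_first_moment M (fun g => F g * star (F g)) (hF.mul (aux_star_m hF)) (hL.mul hL.conj)
  push_cast
  rw [← integral_complex_ofReal, ← integral_complex_ofReal]
  have e1 : ∀ z : ℂ, ((Complex.normSq z : ℝ) : ℂ) = z * star z := fun z => (Complex.mul_conj z).symm
  push_cast
  simp only [e1]
  exact h

lemma aux_SINR (hlam : ∀ l k, 0 < lam l k) (hδ : 0 ≤ δ) (t : ℕ) (ht : B < t) (j : Fin L) (k : Fin K)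
    (p : Fin L → Fin K → ℝ) (ν : Fin L → Fin K → ℝ) 
    (V : (AuxI L K → ℝ) → ℂ) (hV : V = aV κ x ((lam j k : ℝ) : ℂ) (auxC lam σ2 ξ κ δ x j k t))
    (hν : ∀ l m, ν l m = Complex.normSq (∫ g, star (V g) * aU l m t g ∂(auxP lam σ2 ξ δ))) :
    M.SINR p j k t = (N : ℝ) ^ 2 * (p j k * ν j k) /
      ((N : ℝ) ^ 2 * (∑ lm ∈ (Finset.univ : Finset (Fin L × Fin K)).erase (j, k), p lm.1 lm.2 * ν lm.1 lm.2)
        + N * ((∑ l, ∑ m, p l m * ((∫ g, Complex.normSq (star (V g) * aU l m t g) ∂(auxP lam σ2 ξ δ)) - ν l m))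
          + (∫ g, Complex.normSq (star (V g) * aUps κ p t g) ∂(auxP lam σ2 ξ δ))
          + σ2 * ξ * ∫ g, Complex.normSq (V g) ∂(auxP lam σ2 ξ δ))) := by
  have mV : Measurable V := by rw [hV]; fun_prop
  have msV := aux_star_m mV
  have LV : AuxAL (auxP lam σ2 ξ δ) V := by rw [hV]; exact aV_AL _ _ _ _ _ _ _ _
  unfold MIMOModel.SINR
  simp only [aux_hHat, aux_hEff, aux_ups, ← hV]
  have h1 := aux_first_moment M (fun g => star (V g) * aU j k t g) (by fun_prop)
    (LV.conj.mul (aU_AL lam σ2 ξ δ j k t))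
  have h2 := fun l m => aux_second_moment (auxT M) (auxT_meas M) (auxT_map M) (auxT_indep M)
    (fun g => star (V g) * aU l m t g) (by fun_prop) (LV.conj.mul (aU_AL lam σ2 ξ δ l m t))
  have h3 := aux_second_moment (auxT M) (auxT_meas M) (auxT_map M) (auxT_indep M)
    (fun g => star (V g) * aUps κ p t g) (by fun_prop) (LV.conj.mul (aUps_AL lam σ2 ξ δ κ p t))
  have h4 := aux_power M V mV LV
  have h5 : ∫ g, star (V g) * aUps κ p t g ∂(auxP lam σ2 ξ δ) = 0 := by
    rw [hV]; exact aU_expand lam σ2 ξ δ κ x p _ _ t ht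
  rw [h1, h3, h4, h5]
  simp only [h2, ← hν, Complex.normSq_mul, Complex.normSq_natCast, map_zero, mul_zero, add_zero]
  have hs : ∑ l, ∑ m, p l m * ν l m = p j k * ν j k +
      ∑ lm ∈ (Finset.univ : Finset (Fin L × Fin K)).erase (j, k), p lm.1 lm.2 * ν lm.1 lm.2 := by
    rw [← Fintype.sum_prod_type' (f := fun l m => p l m * ν l m),
      ← Finset.add_sum_erase _ _ (Finset.mem_univ (j, k))]
  have he : ∀ Q : Fin L → Fin K → ℝ, ∑ l, ∑ m, p l m * (N * Q l m + ((N : ℝ) ^ 2 - N) * ν l m) =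
      (N : ℝ) ^ 2 * (p j k * ν j k +
      ∑ lm ∈ (Finset.univ : Finset (Fin L × Fin K)).erase (j, k), p lm.1 lm.2 * ν lm.1 lm.2)
      + N * ∑ l, ∑ m, p l m * (Q l m - ν l m) := by
    intro Q
    rw [← hs]
    simp only [Finset.mul_sum, ← Finset.sum_add_distrib]
    refine Finset.sum_congr rfl fun l _ => Finset.sum_congr rfl fun m _ => ?_
    ring
  have he' := he (fun l m => ∫ g, Complex.normSq (star (V g)) * Complex.normSq (aU l m t g) ∂(auxP lam σ2 ξ δ))
  rw [he']
  congr 1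
  · ring
  · ring
end link

lemma aux_A {B L K : ℕ} (lam : Fin L → Fin K → ℝ) (σ2 ξ κ δ : ℝ) (x : Fin L → Fin K → Fin B → ℂ)
    (t : ℕ) (j l : Fin L) (k m : Fin K) :
    star (x j k) ⬝ᵥ (Dmat δ t B * (PsiMat lam σ2 ξ κ δ x)⁻¹ * (Dmat δ t B)ᴴ).mulVec (x l m) =
    ∑ b, auxC lam σ2 ξ κ δ x j k t b *
        ((Real.exp (-(δ / 2) * ((t : ℝ) - ((b : ℕ) + 1))) : ℂ) * x l m b) := by
  rw [← Matrix.mulVec_mulVec, Matrix.dotProduct_mulVec]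
  unfold auxC dotProduct
  refine Finset.sum_congr rfl fun b _ => ?_
  congr 1
  unfold Dmat
  rw [Matrix.diagonal_conjTranspose, Matrix.mulVec_diagonal]
  congr 1
  exact Complex.conj_ofReal _

lemma aux_Psi_herm {B L K : ℕ} (lam : Fin L → Fin K → ℝ) (σ2 ξ κ δ : ℝ)
    (x : Fin L → Fin K → Fin B → ℂ) : (PsiMat lam σ2 ξ κ δ x)ᴴ = PsiMat lam σ2 ξ κ δ x := by
  have hr : ∀ r : ℝ, star (r : ℂ) = r := fun r => Complex.conj_ofReal r
  have hX : ∀ v : Fin B → ℂ, (Xmat κ δ v)ᴴ = Xmat κ δ v := by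
    intro v
    ext b₁ b₂
    simp only [Xmat, Matrix.conjTranspose_apply, Matrix.of_apply]
    by_cases h : b₁ = b₂
    · subst h; simp only [if_true, hr]
    · rw [if_neg h, if_neg (Ne.symm h), star_mul', star_mul', hr, star_star, abs_sub_comm]
      ring
  unfold PsiMat
  simp only [Matrix.conjTranspose_add, Matrix.conjTranspose_sum, Matrix.conjTranspose_smul, hX, hr,
    Matrix.conjTranspose_one]

lemma aux_A_real {B L K : ℕ} (lam : Fin L → Fin K → ℝ) (σ2 ξ κ δ : ℝ) (x : Fin L → Fin K → Fin B → ℂ)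
    (t : ℕ) (j : Fin L) (k : Fin K) (a : ℂ)
    (ha : a = star (x j k) ⬝ᵥ (Dmat δ t B * (PsiMat lam σ2 ξ κ δ x)⁻¹ * (Dmat δ t B)ᴴ).mulVec (x j k)) :
    star a = a := by
  set Q := Dmat δ t B * (PsiMat lam σ2 ξ κ δ x)⁻¹ * (Dmat δ t B)ᴴ with hQ
  have hH : Qᴴ = Q := by
    rw [hQ, Matrix.conjTranspose_mul, Matrix.conjTranspose_mul, Matrix.conjTranspose_conjTranspose,
      Matrix.conjTranspose_nonsing_inv, aux_Psi_herm, Matrix.mul_assoc]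
  rw [ha, ← Matrix.star_dotProduct_star, star_star, Matrix.star_mulVec, hH, ← Matrix.dotProduct_mulVec]
/-- **Asymptotic SINR limit with MRC (Corollary 1).** Fix all parameters except the number of
antennas `N`, and let `A_{lm} = x̃_{jk}ᴴ D_{δ(t)} Ψ_j⁻¹ D_{δ(t)}ᴴ x̃_{lm}`. If `x̃_{jk} ≠ 0`
and the pilot-contamination constant `Σ_{(l,m)≠(j,k)} p_{lm} λ_{jlm}² |A_{lm}|²` is strictly
positive, then as `N → ∞` the SINR with MRC converges to
`p_{jk} λ_{jjk}² A_{jk}² / Σ_{(l,m)≠(j,k)} p_{lm} λ_{jlm}² |A_{lm}|²`: the distortion-noise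
and receiver-noise contributions vanish and only pilot contamination remains. -/
theorem mrc_asymptotic_sinr
    {B L K : ℕ} {lam : Fin L → Fin K → ℝ} {σ2 ξ κ δ : ℝ}
    {x : Fin L → Fin K → Fin B → ℂ}
    (Ωf : ℕ → Type*) [∀ N, MeasureSpace (Ωf N)]
    [∀ N, IsProbabilityMeasure (ℙ : Measure (Ωf N))]
    (M : ∀ N : ℕ, MIMOModel (Ωf N) N B L K lam σ2 ξ κ δ x)
    (hlam : ∀ l k, 0 < lam l k) (hσ2 : 0 < σ2) (hξ : 1 ≤ ξ) (hκ : 0 ≤ κ) (hδ : 0 ≤ δ)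
    (t : ℕ) (ht : B < t) (j : Fin L) (k : Fin K)
    (p : Fin L → Fin K → ℝ) (hp : ∀ l m, 0 < p l m)
    (A : Fin L → Fin K → ℂ)
    (hA : ∀ l m, A l m = star (x j k) ⬝ᵥ (Dmat δ t B * (PsiMat lam σ2 ξ κ δ x)⁻¹
        * (Dmat δ t B)ᴴ).mulVec (x l m))
    (hx : x j k ≠ 0)
    (hPC : 0 < ∑ lm ∈ (Finset.univ : Finset (Fin L × Fin K)).erase (j, k),
        p lm.1 lm.2 * lam lm.1 lm.2 ^ 2 * Complex.normSq (A lm.1 lm.2)) :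
    Filter.Tendsto (fun N : ℕ => (((M N).SINR p j k t : ℝ) : ℂ)) Filter.atTop
      (nhds (((p j k : ℝ) : ℂ) * ((lam j k : ℝ) : ℂ) ^ 2 * A j k ^ 2 /
        ((∑ lm ∈ (Finset.univ : Finset (Fin L × Fin K)).erase (j, k),
            p lm.1 lm.2 * lam lm.1 lm.2 ^ 2 * Complex.normSq (A lm.1 lm.2) : ℝ) : ℂ))) := by
  set V := aV κ x ((lam j k : ℝ) : ℂ) (auxC lam σ2 ξ κ δ x j k t) with hV
  set ν : Fin L → Fin K → ℝ := fun l m => Complex.normSq (∫ g, star (V g) * aU l m t g ∂(auxP lam σ2 ξ δ)) with hν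
  have hνA : ∀ l m, ν l m = lam j k ^ 2 * (lam l m ^ 2 * Complex.normSq (A l m)) := by
    intro l m
    simp only [hν, hV]
    rw [aux_VU lam σ2 ξ δ hlam hδ κ x _ _ t ht l m, ← aux_A, ← hA]
    have hs : ∀ z : ℂ, Complex.normSq (star z) = Complex.normSq z := Complex.normSq_conj
    rw [Complex.normSq_mul, Complex.normSq_mul, hs, hs, Complex.normSq_ofReal, Complex.normSq_ofReal]
    ring
  have hsum : ∑ lm ∈ (Finset.univ : Finset (Fin L × Fin K)).erase (j, k), p lm.1 lm.2 * ν lm.1 lm.2 =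
      lam j k ^ 2 * ∑ lm ∈ (Finset.univ : Finset (Fin L × Fin K)).erase (j, k),
        p lm.1 lm.2 * lam lm.1 lm.2 ^ 2 * Complex.normSq (A lm.1 lm.2) := by
    rw [Finset.mul_sum]
    refine Finset.sum_congr rfl fun lm _ => ?_
    rw [hνA]; ring
  have hS := fun N => aux_SINR (M N) hlam hδ t ht j k p ν V hV (fun _ _ => rfl)
  rw [hsum] at hS
  set s := ∑ lm ∈ (Finset.univ : Finset (Fin L × Fin K)).erase (j, k),
        p lm.1 lm.2 * lam lm.1 lm.2 ^ 2 * Complex.normSq (A lm.1 lm.2) with hs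
  obtain ⟨c, hc⟩ : ∃ c : ℝ, ∀ N, (M N).SINR p j k t = (N : ℝ) ^ 2 * (p j k * ν j k) /
      ((N : ℝ) ^ 2 * (lam j k ^ 2 * s) + N * c) := ⟨_, hS⟩
  have hl := hlam j k
  have hb : lam j k ^ 2 * s ≠ 0 := by positivity
  have hlim : Filter.Tendsto (fun N : ℕ => (M N).SINR p j k t) Filter.atTop
      (nhds ((p j k * ν j k) / (lam j k ^ 2 * s))) := by
    have h0 : Filter.Tendsto (fun N : ℕ => lam j k ^ 2 * s + c / (N : ℝ)) Filter.atTop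
        (nhds (lam j k ^ 2 * s + 0)) :=
      tendsto_const_nhds.add (tendsto_const_div_atTop_nhds_zero_nat c)
    rw [add_zero] at h0
    refine (tendsto_const_nhds.div h0 hb).congr' ?_
    filter_upwards [Filter.eventually_ge_atTop 1] with N hN
    have hN' : (N : ℝ) ≠ 0 := by positivity
    rw [hc N]
    have e : (N : ℝ) ^ 2 * (lam j k ^ 2 * s) + N * c = (N : ℝ) ^ 2 * (lam j k ^ 2 * s + c / N) := by
      field_simp
    rw [e, mul_div_mul_left _ _ (pow_ne_zero 2 hN')]
    rfl
  have hfin := (Complex.continuous_ofReal.tendsto _).comp hlim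
  have hAsq : ((Complex.normSq (A j k) : ℝ) : ℂ) = A j k ^ 2 := by
    rw [← Complex.mul_conj]
    have : (starRingEnd ℂ) (A j k) = A j k := aux_A_real lam σ2 ξ κ δ x t j k (A j k) (hA j k)
    rw [this, sq]
  have heq : (((p j k * ν j k) / (lam j k ^ 2 * s) : ℝ) : ℂ) =
      ((p j k : ℝ) : ℂ) * ((lam j k : ℝ) : ℂ) ^ 2 * A j k ^ 2 / ((s : ℝ) : ℂ) := by
    rw [hνA, ← hAsq]
    have : p j k * (lam j k ^ 2 * (lam j k ^ 2 * Complex.normSq (A j k))) / (lam j k ^ 2 * s) =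
      p j k * lam j k ^ 2 * Complex.normSq (A j k) / s := by
      have : s ≠ 0 := hPC.ne'
      field_simp
    rw [this]
    push_cast
    ring
  rw [heq] at hfin
  exact hfin
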